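/- For every K ⊆ [n-1], Σ_{v ∈ W(K)} t^{des(v)} = Σ_{w ∈ Ŵ^K} t^{des(w)} (1+t)^{n-1-2·des(w)}, where Ŵ^K is the set of minimal-length coset representatives of W_K in S_n having no double descent and no final descent. -/

import Mathlib

open Finset Polynomial

open scoped Classical

noncomputable section

/-- The letter (0-based) at 0-based position `i` in the one-line notation of `w`
(junk value `0` out of range). -/
def ol (n : ℕ) (w : Equiv.Perm (Fin n)) (i : ℕ) : ℕ :=
  if h : i < n then (w ⟨i, h⟩ : ℕ) else 0

/-- The descent set of `w`, with 0-based positions: `i ∈ DesSet n w` (for `i ≤ n-2`)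
means `w(i) > w(i+1)`.  (This is the paper's descent `i+1 ∈ [n-1]`.) -/
def DesSet (n : ℕ) (w : Equiv.Perm (Fin n)) : Finset ℕ :=
  (Finset.range (n - 1)).filter fun i => ol n w (i + 1) < ol n w i

/-- The number of descents of `w`. -/
def des (n : ℕ) (w : Equiv.Perm (Fin n)) : ℕ := (DesSet n w).card

/-- `w` has no double descent: no two consecutive descent positions. -/
def NoDoubleDescent (n : ℕ) (w : Equiv.Perm (Fin n)) : Prop :=
  ∀ i ∈ DesSet n w, i + 1 ∉ DesSet n w

/-- `w` has no initial descent (no descent at the first position). -/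
def NoInitialDescent (n : ℕ) (w : Equiv.Perm (Fin n)) : Prop := 0 ∉ DesSet n w

/-- `w` has no final descent (no descent at the last position, paper's `n-1`). -/
def NoFinalDescent (n : ℕ) (w : Equiv.Perm (Fin n)) : Prop := n - 2 ∉ DesSet n w

/-- The involution `w ↦ w*`, `w*(i) = n+1-w(n+1-i)` in 1-based notation. -/
def starPerm (n : ℕ) (w : Equiv.Perm (Fin n)) : Equiv.Perm (Fin n) :=
  (Fin.revPerm.trans w).trans Fin.revPerm

/-- The letter at 1-based position `i ∈ [1,n]` of `w`, as an element of `ℕ∞`,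
with the boundary convention `w(0) = w(n+1) = ⊤`. -/
def olb (n : ℕ) (w : Equiv.Perm (Fin n)) (i : ℕ) : ℕ∞ :=
  if h : 1 ≤ i ∧ i ≤ n then ((w ⟨i - 1, by omega⟩ : ℕ) : ℕ∞) else ⊤

/-- 1-based position `i` is a peak of `w` : `w(i-1) < w(i) > w(i+1)` (boundaries `⊤`,
so positions `1` and `n` are never peaks). -/
def IsPeak (n : ℕ) (w : Equiv.Perm (Fin n)) (i : ℕ) : Prop :=
  olb n w (i - 1) < olb n w i ∧ olb n w (i + 1) < olb n w i

/-- 1-based position `i` is a valley of `w` : `w(i-1) > w(i) < w(i+1)`. -/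
def IsValley (n : ℕ) (w : Equiv.Perm (Fin n)) (i : ℕ) : Prop :=
  olb n w i < olb n w (i - 1) ∧ olb n w i < olb n w (i + 1)

/-- 1-based position `i` holds a free letter of `w` : neither a peak nor a valley. -/
def IsFree (n : ℕ) (w : Equiv.Perm (Fin n)) (i : ℕ) : Prop :=
  ¬ IsPeak n w i ∧ ¬ IsValley n w i

/-- The number of peaks of `w`. -/
def pk (n : ℕ) (w : Equiv.Perm (Fin n)) : ℕ :=
  ((Finset.Icc 1 n).filter (IsPeak n w)).card

/-- The number of inversions of `w`, i.e. its Coxeter length. -/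
def invNum (n : ℕ) (w : Equiv.Perm (Fin n)) : ℕ :=
  (Finset.univ.filter fun p : Fin n × Fin n => p.1 < p.2 ∧ w p.2 < w p.1).card

/-- The standard parabolic subgroup `W_K` of `S_n` generated by the adjacent
transpositions `(k, k+1)` (1-based letters `k ∈ K`, i.e. 0-based `k-1`, `k`). -/
def WK (n : ℕ) (K : Finset ℕ) : Subgroup (Equiv.Perm (Fin n)) :=
  Subgroup.closure { s | ∃ k ∈ K, ∃ hk : k < n,
    s = Equiv.swap (⟨k - 1, lt_of_le_of_lt (Nat.sub_le k 1) hk⟩ : Fin n) ⟨k, hk⟩ }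

/-- The set `W^K` of permutations in which, for every `k ∈ K`, the letter `k`
appears before the letter `k+1` (1-based letters; these are the minimal-length
coset representatives of `W_K`). -/
def WKreps (n : ℕ) (K : Finset ℕ) : Finset (Equiv.Perm (Fin n)) :=
  Finset.univ.filter fun w => ∀ k ∈ K, ∀ hk : k < n,
    w⁻¹ (⟨k - 1, lt_of_le_of_lt (Nat.sub_le k 1) hk⟩ : Fin n) < w⁻¹ ⟨k, hk⟩

/-- The set `W(K) = { v ∈ S_n : v⁻¹(k) − v⁻¹(k+1) ≤ 1 for all k ∈ K }`
(1-based letters `k`, `k+1`). -/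
def Wset (n : ℕ) (K : Finset ℕ) : Finset (Equiv.Perm (Fin n)) :=
  Finset.univ.filter fun v => ∀ k ∈ K, ∀ hk : k < n,
    ((v⁻¹ (⟨k - 1, lt_of_le_of_lt (Nat.sub_le k 1) hk⟩ : Fin n) : Fin n) : ℕ) ≤
      ((v⁻¹ (⟨k, hk⟩ : Fin n) : Fin n) : ℕ) + 1

/-- The orbit of `i` under the action of `W_K` on positions/letters. -/
def orbitFinset (n : ℕ) (K : Finset ℕ) (i : Fin n) : Finset (Fin n) :=
  Finset.univ.filter fun j => ∃ u ∈ WK n K, u i = j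

/-- The set of orbits of `W_K` on `[n]`. -/
def orbitsFinset (n : ℕ) (K : Finset ℕ) : Finset (Finset (Fin n)) :=
  Finset.univ.image (orbitFinset n K)

/-- The one-line notation of `w` as a list of (0-based) letters. -/
def word (n : ℕ) (w : Equiv.Perm (Fin n)) : List ℕ := List.ofFn fun i => (w i : ℕ)

/-- A single valley hop of the free letter `j` from a downslope (in `v`) to the
nearest upslope of the same height (giving `u`): `j` moves rightwards directly
across the adjacent valley `B`. -/
def hopStep (v u : List ℕ) : Prop :=
  ∃ (A B C : List ℕ) (j : ℕ), B ≠ [] ∧ (∀ x ∈ B, x < j) ∧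
    (∀ x ∈ A.getLast?, j < x) ∧ (∀ x ∈ C.head?, j < x) ∧
    v = A ++ j :: (B ++ C) ∧ u = A ++ (B ++ j :: C)

/-- Hop equivalence (valley hopping) on `S_n`: the equivalence closure of single
hops of free letters. -/
def hopEquiv (n : ℕ) (a b : Equiv.Perm (Fin n)) : Prop :=
  Relation.EqvGen (fun x y : Equiv.Perm (Fin n) => hopStep (word n x) (word n y)) a b

/-- The index (1-based) of the `W_K`-orbit containing the letter `x ∈ [1,n]`:
orbits are consecutive intervals, numbered from the left. -/
def orbIdx (K : Finset ℕ) (x : ℕ) : ℕ :=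
  1 + ((Finset.Icc 1 (x - 1)).filter fun t => t ∉ K).card

/-- The (0-based) descent set of a word `v` of length `n`. -/
def wdes (n : ℕ) (v : Fin n → ℕ) : Finset ℕ :=
  (Finset.range (n - 1)).filter fun i =>
    if h : i + 1 < n then v ⟨i + 1, h⟩ < v ⟨i, by omega⟩ else False

/-- The word `v` has content `μ(K)`: for each `i`, the number of letters of `v`
equal to `i` is the size of the `i`-th orbit of `W_K` on `[1,n]`. -/
def HasContent (n : ℕ) (K : Finset ℕ) (v : Fin n → ℕ) : Prop :=
  ∀ i : ℕ, (Finset.univ.filter fun j => v j = i).card =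
    ((Finset.Icc 1 n).filter fun x => orbIdx K x = i).card

/-- `w` is the standardization `φ(v)` of the word `v`: `w` orders positions by
letter value, breaking ties from left to right.  (This is exactly the map `φ`
of the paper: if `j` is the `k`-th smallest position with `v(j) = i`, then
`φ(v)(j) = k + μ₁ + ⋯ + μ_{i-1}`.) -/
def IsStd (n : ℕ) (v : Fin n → ℕ) (w : Equiv.Perm (Fin n)) : Prop :=
  ∀ j j' : Fin n, w j < w j' ↔ (v j < v j' ∨ (v j = v j' ∧ j < j'))

/-!
A permutation `v` in `W(K)` is determined by the word `u` obtained by replacing each letter with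
the index of its `W_K`-orbit, together with the set of plateaus of `u` at which `v` descends. Every
set of plateaus occurs: each maximal run of consecutive positions in it is a stretch of `v`
consisting of consecutive letters in decreasing order. Hence the left-hand side is the sum of
`t ^ des u * (1 + t) ^ plat u` over the rearrangements `u` of the word of orbit indices, and `W^K`
corresponds to the words with no plateau chosen.

Both weighted word counts are coefficients of `∏ i, y (u i)` in a generating function `F` over all
nonempty words. Splitting off the first letter gives a linear system for the contributions of the
words with a given first letter, from which
`(1 + F) * ∏ b, (1 - y b) = (1 + t * F) * ∏ b, (1 - t * y b)`
in both cases. The coefficient of `F` in this equation has constant term `1 - t`, so the equation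
determines `F`.
-/

section Words

variable {α : Type*} {m n : ℕ}

/-- The plateau positions of a nonempty word; position `i` stands for the pair of letters
`i`, `i + 1`. -/
def plateaus (u : Fin (m + 1) → α) : Finset (Fin m) := {i | u i.castSucc = u i.succ}

/-- The rearrangements of a word, i.e. the words with the same content. -/
def rearrangements (f : Fin n → α) : Finset (Fin n → α) :=
  univ.image fun σ : Equiv.Perm (Fin n) => f ∘ σ

theorem mem_plateaus {u : Fin (m + 1) → α} {i : Fin m} :
    i ∈ plateaus u ↔ u i.castSucc = u i.succ := by
  simp [plateaus]

theorem mem_rearrangements {f u : Fin n → α} :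
    u ∈ rearrangements f ↔ ∃ σ : Equiv.Perm (Fin n), f ∘ σ = u := by
  simp [rearrangements]

theorem plateaus_cons_of_eq {a : α} {u : Fin (m + 1) → α} (h : a = u 0) :
    plateaus (Fin.cons a u : Fin (m + 2) → α) =
      insert 0 ((plateaus u).map (Fin.succEmb m)) := by
  ext i
  cases i using Fin.cases <;> simp [mem_plateaus, h]

theorem plateaus_cons_of_ne {a : α} {u : Fin (m + 1) → α} (h : a ≠ u 0) :
    plateaus (Fin.cons a u : Fin (m + 2) → α) = (plateaus u).map (Fin.succEmb m) := by
  ext i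
  cases i using Fin.cases <;> simp [mem_plateaus, h]

section Preorder

variable [Preorder α]

/-- The descent positions of a nonempty word; position `i` stands for the pair of letters
`i`, `i + 1`. -/
def descents (u : Fin (m + 1) → α) : Finset (Fin m) := {i | u i.succ < u i.castSucc}

theorem mem_descents {u : Fin (m + 1) → α} {i : Fin m} :
    i ∈ descents u ↔ u i.succ < u i.castSucc := by
  simp [descents]

theorem lt_of_forall_mem_descents {u : Fin (m + 1) → α} {i j : Fin (m + 1)} (hij : i < j)
    (h : ∀ s : Fin m, i ≤ s.castSucc → s.succ ≤ j → s ∈ descents u) : u j < u i := by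
  induction j using Fin.induction with
  | zero => exact absurd hij (Fin.not_lt_zero i)
  | succ k ih =>
    have step : u k.succ < u k.castSucc :=
      mem_descents.1 (h k (Fin.le_castSucc_iff.2 hij) le_rfl)
    rcases (Fin.le_castSucc_iff.2 hij).eq_or_lt with rfl | hik
    · exact step
    · exact step.trans <| ih hik fun s his hsk =>
        h s his (hsk.trans (Fin.castSucc_lt_succ).le)

theorem disjoint_descents_plateaus (u : Fin (m + 1) → α) :
    Disjoint (descents u) (plateaus u) :=
  Finset.disjoint_left.2 fun _ hd hp => (mem_descents.1 hd).ne' (mem_plateaus.1 hp)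

theorem descents_cons_of_lt {a : α} {u : Fin (m + 1) → α} (h : u 0 < a) :
    descents (Fin.cons a u : Fin (m + 2) → α) =
      insert 0 ((descents u).map (Fin.succEmb m)) := by
  ext i
  cases i using Fin.cases <;> simp [mem_descents, h]

theorem descents_cons_of_le {a : α} {u : Fin (m + 1) → α} (h : a ≤ u 0) :
    descents (Fin.cons a u : Fin (m + 2) → α) = (descents u).map (Fin.succEmb m) := by
  ext i
  cases i using Fin.cases <;> simp [mem_descents, h.not_gt]

end Preorder

theorem mem_rearrangements_iff_perm [LinearOrder α] {f u : Fin n → α} :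
    u ∈ rearrangements f ↔ (List.ofFn u).Perm (List.ofFn f) := by
  rw [mem_rearrangements]
  constructor
  · rintro ⟨σ, rfl⟩
    exact σ.ofFn_comp_perm f
  · intro h
    have sorted_perm : (List.ofFn (f ∘ Tuple.sort f)).Perm (List.ofFn (u ∘ Tuple.sort u)) :=
      ((Tuple.sort f).ofFn_comp_perm f).trans
        (h.symm.trans ((Tuple.sort u).ofFn_comp_perm u).symm)
    have sorted_eq : f ∘ Tuple.sort f = u ∘ Tuple.sort u :=
      List.ofFn_injective <| sorted_perm.eq_of_pairwise'
        (Tuple.monotone_sort f).sortedLE_ofFn.pairwise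
        (Tuple.monotone_sort u).sortedLE_ofFn.pairwise
    refine ⟨(Tuple.sort u).symm.trans (Tuple.sort f), funext fun i => ?_⟩
    simpa using congrFun sorted_eq ((Tuple.sort u).symm i)

end Words

section Weights

variable {R : Type*} [CommSemiring R] {m : ℕ}

/-- The weight `t ^ des * (1 + t) ^ plat` of a word: every plateau may be counted as a descent
or not. -/
def plateauWeight {α : Type*} [Preorder α] (t : R) (u : Fin (m + 1) → α) : R :=
  t ^ #(descents u) * (1 + t) ^ #(plateaus u)

/-- A set of positions is sparse if each of its elements is followed by a position outside the
set. For a descent set this says that there is neither a double nor a final descent. -/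
def IsSparse (D : Finset (Fin m)) : Prop := ∀ i ∈ D, ∃ j ∉ D, (j : ℕ) = i + 1

/-- The weight `t ^ #D * (1 + t) ^ (m - 2 * #D)` of a sparse set of positions, extended by zero
to all sets. -/
def sparseWeight (t : R) (D : Finset (Fin m)) : R :=
  if IsSparse D then t ^ #D * (1 + t) ^ (m - 2 * #D) else 0

/-- The factor that `D` contributes to `sparseWeight` when a descent is put in front of it: this
descent forces the first position to exist and to lie outside `D`. -/
def sparseWeightAfterDescent (t : R) (D : Finset (Fin m)) : R :=
  if (∃ j ∉ D, (j : ℕ) = 0) ∧ IsSparse D then t ^ #D * (1 + t) ^ (m - 1 - 2 * #D) else 0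

theorem map_plateauWeight {α : Type*} [Preorder α] {S : Type*} [CommSemiring S] (φ : R →+* S)
    (t : R) (u : Fin (m + 1) → α) : φ (plateauWeight t u) = plateauWeight (φ t) u := by
  simp [plateauWeight]

theorem map_sparseWeight {S : Type*} [CommSemiring S] (φ : R →+* S) (t : R) (D : Finset (Fin m)) :
    φ (sparseWeight t D) = sparseWeight (φ t) D := by
  simp [sparseWeight, apply_ite φ]

theorem plateauWeight_eq_sum_powerset {α : Type*} [Preorder α] (t : R) (u : Fin (m + 1) → α) :
    plateauWeight t u = ∑ S ∈ (plateaus u).powerset, t ^ #(descents u ∪ S) := by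
  have card_union : ∀ S ∈ (plateaus u).powerset, #(descents u ∪ S) = #(descents u) + #S :=
    fun S hS => card_union_of_disjoint
      ((disjoint_descents_plateaus u).mono_right (mem_powerset.1 hS))
  rw [plateauWeight, add_comm 1 t, ← Finset.sum_pow_mul_eq_add_pow, mul_sum]
  refine sum_congr rfl fun S hS => ?_
  rw [card_union S hS, pow_add, one_pow, mul_one]

theorem plateauWeight_cons {α : Type*} [LinearOrder α] (t : R) (a : α) (u : Fin (m + 1) → α) :
    plateauWeight t (Fin.cons a u : Fin (m + 2) → α) =
      (if u 0 < a then t else if a = u 0 then 1 + t else 1) * plateauWeight t u := by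
  unfold plateauWeight
  rcases lt_trichotomy (u 0) a with h | h | h
  · rw [descents_cons_of_lt h, plateaus_cons_of_ne h.ne', if_pos h,
      card_insert_of_notMem (by simp), card_map, card_map]
    ring
  · rw [descents_cons_of_le h.ge, plateaus_cons_of_eq h.symm, if_neg h.not_lt, if_pos h.symm,
      card_insert_of_notMem (by simp), card_map, card_map]
    ring
  · rw [descents_cons_of_le h.le, plateaus_cons_of_ne h.ne, if_neg h.not_gt, if_neg h.ne,
      card_map, card_map, one_mul]

theorem IsSparse.two_mul_card_le {D : Finset (Fin m)} (h : IsSparse D) : 2 * #D ≤ m := by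
  choose! next next_notMem next_val using h
  have card_le_compl : #D ≤ #Dᶜ :=
    card_le_card_of_injOn next (fun i hi => by simpa using next_notMem i hi) fun i hi j hj hij => by
      have := next_val i hi
      have := next_val j hj
      rw [hij] at *
      omega
  have := card_add_card_compl D
  rw [Fintype.card_fin] at this
  omega

theorem isSparse_map_succ {D : Finset (Fin m)} :
    IsSparse (D.map (Fin.succEmb m)) ↔ IsSparse D := by
  simp [IsSparse, Fin.exists_fin_succ]

theorem isSparse_insert_zero_map_succ {D : Finset (Fin m)} :
    IsSparse (insert 0 (D.map (Fin.succEmb m))) ↔ (∃ j ∉ D, (j : ℕ) = 0) ∧ IsSparse D := by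
  simp [IsSparse, Fin.exists_fin_succ]

theorem sparseWeight_map_succ (t : R) (D : Finset (Fin m)) :
    sparseWeight t (D.map (Fin.succEmb m)) = (1 + t) * sparseWeight t D := by
  simp only [sparseWeight, isSparse_map_succ, card_map]
  split_ifs with h
  · rw [Nat.sub_add_comm h.two_mul_card_le, pow_succ]
    ring
  · rw [mul_zero]

theorem sparseWeight_insert_zero_map_succ (t : R) (D : Finset (Fin m)) :
    sparseWeight t (insert 0 (D.map (Fin.succEmb m))) = t * sparseWeightAfterDescent t D := by
  have card_insert : #(insert 0 (D.map (Fin.succEmb m))) = #D + 1 := by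
    rw [card_insert_of_notMem (by simp), card_map]
  simp only [sparseWeight, sparseWeightAfterDescent, isSparse_insert_zero_map_succ, card_insert]
  split_ifs
  · rw [show m + 1 - 2 * (#D + 1) = m - 1 - 2 * #D by omega, pow_succ]
    ring
  · rw [mul_zero]

theorem sparseWeightAfterDescent_map_succ (t : R) (D : Finset (Fin m)) :
    sparseWeightAfterDescent t (D.map (Fin.succEmb m)) = sparseWeight t D := by
  simp [sparseWeightAfterDescent, sparseWeight, isSparse_map_succ]

theorem sparseWeightAfterDescent_insert_zero (t : R) (D : Finset (Fin (m + 1))) :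
    sparseWeightAfterDescent t (insert 0 D) = 0 := by
  refine if_neg fun h => ?_
  obtain ⟨⟨j, hj, hj0⟩, -⟩ := h
  exact hj (mem_insert.2 (Or.inl (Fin.ext hj0)))

end Weights

section WordSeries

variable {A : Type*} [CommSemiring A] (x : ℕ → A) (N : ℕ)

/-- The variable `z * x b` marking an occurrence of the letter `b`, where `z` is the power series
variable counting letters. -/
def letterSeries (b : ℕ) : PowerSeries A := PowerSeries.X * PowerSeries.C (x b)

/-- The generating function, weighted by `W`, of the words with first letter `a` and all other
letters below `N`. The first letter is not marked. -/
def wordSeries (W : ∀ m, (Fin (m + 1) → ℕ) → A) (a : ℕ) : PowerSeries A :=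
  PowerSeries.mk fun m => ∑ v ∈ Fintype.piFinset fun _ : Fin m => range N,
    W m (Fin.cons a v) * ∏ i, x (v i)

variable {x N}

theorem sum_piFinset_succ {β M : Type*} [AddCommMonoid M] {m : ℕ} (s : Finset β)
    (g : (Fin (m + 1) → β) → M) :
    ∑ u ∈ Fintype.piFinset (fun _ : Fin (m + 1) => s), g u =
      ∑ b ∈ s, ∑ v ∈ Fintype.piFinset (fun _ : Fin m => s), g (Fin.cons b v) := by
  rw [← sum_product']
  refine sum_equiv (Fin.consEquiv fun _ => β).symm (fun u => ?_) fun u _ => ?_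
  · simp [Fin.forall_fin_succ, Fin.consEquiv, Fin.tail]
  · simp [Fin.consEquiv]

theorem coeff_sum_letterSeries_mul_wordSeries (W : ∀ m, (Fin (m + 1) → ℕ) → A) (m : ℕ) :
    PowerSeries.coeff (m + 1) (∑ b ∈ range N, letterSeries x b * wordSeries x N W b) =
      ∑ u ∈ Fintype.piFinset (fun _ : Fin (m + 1) => range N), W m u * ∏ i, x (u i) := by
  rw [sum_piFinset_succ, map_sum]
  refine sum_congr rfl fun b _ => ?_
  rw [letterSeries, wordSeries, mul_assoc, PowerSeries.coeff_succ_X_mul, PowerSeries.coeff_C_mul,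
    PowerSeries.coeff_mk, mul_sum]
  refine sum_congr rfl fun v _ => ?_
  rw [Fin.prod_univ_succ, Fin.cons_zero]
  simp only [Fin.cons_succ]
  ring

theorem wordSeries_eq_add_sum (W : ∀ m, (Fin (m + 1) → ℕ) → A) (a : ℕ) :
    wordSeries x N W a = PowerSeries.C (W 0 fun _ => a) +
      ∑ b ∈ range N, letterSeries x b * wordSeries x N (fun m u => W (m + 1) (Fin.cons a u)) b := by
  ext m
  cases m with
  | zero =>
    have cons_eq : ∀ v : Fin 0 → ℕ, (Fin.cons a v : Fin 1 → ℕ) = fun _ => a := fun v =>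
      funext <| Fin.cases rfl fun i => i.elim0
    simp [wordSeries, letterSeries, mul_assoc, cons_eq]
  | succ m =>
    rw [map_add, coeff_sum_letterSeries_mul_wordSeries, wordSeries, PowerSeries.coeff_mk,
      PowerSeries.coeff_C, if_neg m.succ_ne_zero, zero_add]

theorem wordSeries_eq_C_mul {W W' : ∀ m, (Fin (m + 1) → ℕ) → A} {c : A} {a : ℕ}
    (h : ∀ m u, u 0 = a → W m u = c * W' m u) :
    wordSeries x N W a = PowerSeries.C c * wordSeries x N W' a := by
  ext m
  rw [PowerSeries.coeff_C_mul, wordSeries, wordSeries, PowerSeries.coeff_mk, PowerSeries.coeff_mk,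
    mul_sum]
  refine sum_congr rfl fun v _ => ?_
  rw [h m _ (Fin.cons_zero _ _), mul_assoc]

end WordSeries

section TransferSystems

variable {B : Type*} [CommRing B] {t : B} {N : ℕ} {y Φ Ψ Ψ' : ℕ → B}

theorem sum_sub_sum_eq_of_eq_off {ι M : Type*} [AddCommGroup M] {s : Finset ι} {g g' : ι → M}
    {a : ι} (ha : a ∈ s) (h : ∀ b, b ≠ a → g b = g' b) :
    ∑ b ∈ s, g b - ∑ b ∈ s, g' b = g a - g' a := by
  rw [← sum_sub_distrib]
  exact sum_eq_single_of_mem a ha fun b _ hb => sub_eq_zero.2 (h b hb)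

theorem mul_prod_range_eq_of_mul_eq {M : Type*} [CommMonoid M] {E p q : ℕ → M} (N : ℕ)
    (h : ∀ k < N, E k * p k = E (k + 1) * q k) :
    E 0 * ∏ k ∈ range N, p k = E N * ∏ k ∈ range N, q k := by
  induction N with
  | zero => simp only [prod_range_zero]
  | succ N ih =>
    rw [prod_range_succ, prod_range_succ, ← mul_assoc, ih fun k hk => h k (hk.trans N.lt_succ_self),
      mul_right_comm, h N N.lt_succ_self, mul_right_comm, mul_assoc]

theorem functional_equation_of_plateau_system
    (h : ∀ a, Φ a = 1 + ∑ b ∈ range N,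
      y b * ((if b < a then t else if a = b then 1 + t else 1) * Φ b)) :
    (1 + ∑ b ∈ range N, y b * Φ b) * ∏ b ∈ range N, (1 - y b) =
      (1 + t * ∑ b ∈ range N, y b * Φ b) * ∏ b ∈ range N, (1 - t * y b) := by
  -- `E a` is `Φ a` with the plateau at the first letter not counted as a descent.
  let E : ℕ → B := fun a => 1 + ∑ b ∈ range N, y b * ((if b < a then t else 1) * Φ b)
  have E_self (a : ℕ) (ha : a ∈ range N) : E a = (1 - t * y a) * Φ a := by
    have hsub := sum_sub_sum_eq_of_eq_off
      (g := fun b => y b * ((if b < a then t else if a = b then 1 + t else 1) * Φ b))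
      (g' := fun b => y b * ((if b < a then t else 1) * Φ b)) ha
      fun b hb => by simp only [hb.symm, if_false]
    simp only [lt_irrefl, if_false, if_true] at hsub
    linear_combination -hsub - h a
  have E_succ (a : ℕ) (ha : a ∈ range N) : E (a + 1) = (1 - y a) * Φ a := by
    have hsub := sum_sub_sum_eq_of_eq_off
      (g := fun b => y b * ((if b < a then t else if a = b then 1 + t else 1) * Φ b))
      (g' := fun b => y b * ((if b < a + 1 then t else 1) * Φ b)) ha
      fun b hb => by simp only [hb.symm, if_false, Nat.lt_succ_iff_lt_or_eq, hb, or_false]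
    simp only [lt_irrefl, if_false, if_true, a.lt_succ_self] at hsub
    linear_combination -hsub - h a
  have E_zero : E 0 = 1 + ∑ b ∈ range N, y b * Φ b := by simp [E]
  have E_last : E N = 1 + t * ∑ b ∈ range N, y b * Φ b := by
    rw [mul_sum]
    refine congrArg (1 + ·) (sum_congr rfl fun b hb => ?_)
    rw [if_pos (mem_range.1 hb)]
    ring
  rw [← E_zero, ← E_last]
  refine mul_prod_range_eq_of_mul_eq N fun a ha => ?_
  rw [E_self a (mem_range.2 ha), E_succ a (mem_range.2 ha)]
  ring

theorem functional_equation_of_sparse_system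
    (h : ∀ a, Ψ a = 1 + ∑ b ∈ range N,
      y b * if b < a then t * Ψ' b else (1 + t) * Ψ b)
    (h' : ∀ a, Ψ' a = ∑ b ∈ range N, y b * if b < a then 0 else Ψ b) :
    (1 + ∑ b ∈ range N, y b * Ψ b) * ∏ b ∈ range N, (1 - y b) =
      (1 + t * ∑ b ∈ range N, y b * Ψ b) * ∏ b ∈ range N, (1 - t * y b) := by
  have Ψ_step (a : ℕ) (ha : a ∈ range N) :
      Ψ a - Ψ (a + 1) = y a * ((1 + t) * Ψ a - t * Ψ' a) := by
    have hsub := sum_sub_sum_eq_of_eq_off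
      (g := fun b => y b * if b < a then t * Ψ' b else (1 + t) * Ψ b)
      (g' := fun b => y b * if b < a + 1 then t * Ψ' b else (1 + t) * Ψ b) ha
      fun b hb => by simp only [Nat.lt_succ_iff_lt_or_eq, hb, or_false]
    simp only [lt_irrefl, if_false, if_true, a.lt_succ_self] at hsub
    linear_combination h a - h (a + 1) + hsub
  have Ψ'_step (a : ℕ) (ha : a ∈ range N) : Ψ' a - Ψ' (a + 1) = y a * Ψ a := by
    have hsub := sum_sub_sum_eq_of_eq_off
      (g := fun b => y b * if b < a then 0 else Ψ b)
      (g' := fun b => y b * if b < a + 1 then 0 else Ψ b) ha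
      fun b hb => by simp only [Nat.lt_succ_iff_lt_or_eq, hb, or_false]
    simp only [lt_irrefl, if_false, if_true, a.lt_succ_self] at hsub
    linear_combination h' a - h' (a + 1) + hsub
  have Ψ'_zero : Ψ' 0 = ∑ b ∈ range N, y b * Ψ b := by simp [h' 0]
  have Ψ_zero : Ψ 0 = 1 + (1 + t) * ∑ b ∈ range N, y b * Ψ b := by
    rw [h 0, mul_sum]
    simp [mul_left_comm]
  have Ψ'_last : Ψ' N = 0 := by
    rw [h' N]
    exact sum_eq_zero fun b hb => by rw [if_pos (mem_range.1 hb), mul_zero]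
  -- These two combinations diagonalize the recursion.
  have prod_one_sub := mul_prod_range_eq_of_mul_eq (E := fun a => Ψ a - t * Ψ' a)
    (p := fun a => 1 - y a) (q := 1) N fun a ha => by
      simp only [Pi.one_apply]
      linear_combination Ψ_step a (mem_range.2 ha) - t * Ψ'_step a (mem_range.2 ha)
  have prod_one_sub_mul := mul_prod_range_eq_of_mul_eq (E := fun a => Ψ a - Ψ' a)
    (p := fun a => 1 - t * y a) (q := 1) N fun a ha => by
      simp only [Pi.one_apply]
      linear_combination Ψ_step a (mem_range.2 ha) - Ψ'_step a (mem_range.2 ha)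
  simp only [Pi.one_apply, prod_const_one, Ψ_zero, Ψ'_zero, Ψ'_last]
    at prod_one_sub prod_one_sub_mul
  linear_combination prod_one_sub - prod_one_sub_mul

end TransferSystems

section WordIdentity

variable {A : Type*} [CommSemiring A] (t : A) (x : ℕ → A) (N : ℕ)

theorem wordSeries_plateauWeight_eq (a : ℕ) :
    wordSeries x N (fun _ => plateauWeight t) a = 1 + ∑ b ∈ range N, letterSeries x b *
      ((if b < a then PowerSeries.C t else if a = b then 1 + PowerSeries.C t else 1) *
        wordSeries x N (fun _ => plateauWeight t) b) := by
  rw [wordSeries_eq_add_sum]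
  congr 1
  · simp [plateauWeight, Finset.eq_empty_of_isEmpty]
  · refine sum_congr rfl fun b _ => congrArg _ ?_
    rw [wordSeries_eq_C_mul (W' := fun _ => plateauWeight t)
      (c := if b < a then t else if a = b then 1 + t else 1)
      fun m u hu => by rw [plateauWeight_cons, hu]]
    simp only [apply_ite PowerSeries.C, map_add, map_one]

theorem wordSeries_sparseWeight_eq (a : ℕ) :
    wordSeries x N (fun _ u => sparseWeight t (descents u)) a =
      1 + ∑ b ∈ range N, letterSeries x b * if b < a
        then PowerSeries.C t * wordSeries x N (fun _ u => sparseWeightAfterDescent t (descents u)) b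
        else (1 + PowerSeries.C t) * wordSeries x N (fun _ u => sparseWeight t (descents u)) b := by
  rw [wordSeries_eq_add_sum]
  congr 1
  · simp [sparseWeight, IsSparse, Finset.eq_empty_of_isEmpty]
  · refine sum_congr rfl fun b _ => congrArg _ ?_
    split_ifs with hba
    · exact wordSeries_eq_C_mul fun m u hu => by
        rw [descents_cons_of_lt (hu ▸ hba), sparseWeight_insert_zero_map_succ]
    · rw [← map_one PowerSeries.C, ← map_add]
      exact wordSeries_eq_C_mul fun m u hu => by
        rw [descents_cons_of_le (hu ▸ not_lt.1 hba), sparseWeight_map_succ]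

theorem wordSeries_sparseWeightAfterDescent_eq (a : ℕ) :
    wordSeries x N (fun _ u => sparseWeightAfterDescent t (descents u)) a =
      ∑ b ∈ range N, letterSeries x b * if b < a then 0
        else wordSeries x N (fun _ u => sparseWeight t (descents u)) b := by
  rw [wordSeries_eq_add_sum, show sparseWeightAfterDescent t (descents fun _ : Fin 1 => a) = 0 from
    if_neg fun h => h.1.choose.elim0, map_zero, zero_add]
  refine sum_congr rfl fun b _ => congrArg _ ?_
  split_ifs with hba
  · rw [wordSeries_eq_C_mul (c := 0) (W' := 0) fun m u hu => by
      rw [descents_cons_of_lt (hu ▸ hba), sparseWeightAfterDescent_insert_zero, zero_mul],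
      map_zero, zero_mul]
  · rw [wordSeries_eq_C_mul (c := 1) (W' := fun _ u => sparseWeight t (descents u))
      fun m u hu => by rw [descents_cons_of_le (hu ▸ not_lt.1 hba),
        sparseWeightAfterDescent_map_succ, one_mul], map_one, one_mul]

theorem sum_plateauWeight_mul_prod_eq {A : Type*} [CommRing A] [IsDomain A] {t : A} (ht : t ≠ 1)
    (x : ℕ → A) (N m : ℕ) :
    ∑ u ∈ Fintype.piFinset (fun _ : Fin (m + 1) => range N), plateauWeight t u * ∏ i, x (u i) =
      ∑ u ∈ Fintype.piFinset (fun _ : Fin (m + 1) => range N),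
        sparseWeight t (descents u) * ∏ i, x (u i) := by
  have plateau_eq := functional_equation_of_plateau_system (wordSeries_plateauWeight_eq t x N)
  have sparse_eq := functional_equation_of_sparse_system (wordSeries_sparseWeight_eq t x N)
    (wordSeries_sparseWeightAfterDescent_eq t x N)
  have prod_ne : ∏ b ∈ range N, (1 - letterSeries x b) -
      PowerSeries.C t * ∏ b ∈ range N, (1 - PowerSeries.C t * letterSeries x b) ≠ 0 := by
    intro h
    have constantCoeff_eq := congrArg PowerSeries.constantCoeff h
    simp only [letterSeries, map_sub, map_mul, map_prod, map_one, map_zero,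
      PowerSeries.constantCoeff_C, PowerSeries.constantCoeff_X, zero_mul, mul_zero, sub_zero,
      prod_const_one, mul_one] at constantCoeff_eq
    exact ht (sub_eq_zero.1 constantCoeff_eq).symm
  have series_eq : ∑ b ∈ range N, letterSeries x b * wordSeries x N (fun _ => plateauWeight t) b =
      ∑ b ∈ range N, letterSeries x b *
        wordSeries x N (fun _ u => sparseWeight t (descents u)) b :=
    mul_right_cancel₀ prod_ne (by linear_combination plateau_eq - sparse_eq)
  rw [← coeff_sum_letterSeries_mul_wordSeries (fun _ => plateauWeight t),
    ← coeff_sum_letterSeries_mul_wordSeries (fun _ u => sparseWeight t (descents u)), series_eq]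

end WordIdentity

section Rearrangements

variable {m : ℕ}

theorem coeff_C_mul_prod_X {α R : Type*} [LinearOrder α] [CommSemiring R] {n : ℕ} (c : R)
    (f u : Fin n → α) :
    MvPolynomial.coeff (Multiset.toFinsupp (List.ofFn f : Multiset α))
      (MvPolynomial.C c * ∏ i, MvPolynomial.X (u i)) = if u ∈ rearrangements f then c else 0 := by
  have prod_X : ∏ i, (MvPolynomial.X (u i) : MvPolynomial α R) =
      MvPolynomial.monomial (Multiset.toFinsupp (List.ofFn u : Multiset α)) 1 := by
    have toFinsupp_ofFn : Multiset.toFinsupp (List.ofFn u : Multiset α) =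
        ∑ i, Finsupp.single (u i) 1 := by
      simp only [← Multiset.toFinsupp_singleton, ← map_sum, ← Fin.univ_val_map]
      rw [← Multiset.sum_map_singleton (univ.val.map u), Multiset.map_map]
      rfl
    rw [toFinsupp_ofFn, MvPolynomial.monomial_sum_one]
    rfl
  rw [prod_X, MvPolynomial.coeff_C_mul, MvPolynomial.coeff_monomial]
  simp only [EmbeddingLike.apply_eq_iff_eq, Multiset.coe_eq_coe, ← mem_rearrangements_iff_perm,
    mul_ite, mul_one, mul_zero]

theorem sum_piFinset_ite_mem_rearrangements {n : ℕ} {M : Type*} [AddCommMonoid M]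
    (f : Fin n → ℕ) (g : (Fin n → ℕ) → M) :
    ∑ u ∈ Fintype.piFinset (fun _ => range (univ.sup f + 1)),
      (if u ∈ rearrangements f then g u else 0) = ∑ u ∈ rearrangements f, g u := by
  rw [← sum_filter]
  congr 1
  ext u
  simp only [mem_filter, Fintype.mem_piFinset, mem_range, Nat.lt_succ_iff, and_iff_right_iff_imp,
    mem_rearrangements]
  rintro ⟨σ, rfl⟩ i
  exact le_sup (f := f) (mem_univ (σ i))

theorem sum_plateauWeight_eq_sum_sparseWeight (f : Fin (m + 1) → ℕ) :
    ∑ u ∈ rearrangements f, plateauWeight (X : ℕ[X]) u =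
      ∑ u ∈ rearrangements f, sparseWeight (X : ℕ[X]) (descents u) := by
  apply Polynomial.map_injective (Nat.castRingHom ℤ) Nat.cast_injective
  simp only [← coe_mapRingHom, map_sum, map_plateauWeight, map_sparseWeight]
  simp only [coe_mapRingHom, Polynomial.map_X]
  have C_X_ne_one : (MvPolynomial.C X : MvPolynomial ℕ ℤ[X]) ≠ 1 := fun h =>
    Polynomial.X_ne_C 1 (MvPolynomial.C_injective ℕ ℤ[X] (by simpa using h))
  have key := congrArg (MvPolynomial.coeff (Multiset.toFinsupp (List.ofFn f : Multiset ℕ)))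
    (sum_plateauWeight_mul_prod_eq C_X_ne_one MvPolynomial.X (univ.sup f + 1) m)
  simpa only [← map_plateauWeight, ← map_sparseWeight, MvPolynomial.coeff_sum, coeff_C_mul_prod_X,
    sum_piFinset_ite_mem_rearrangements] using key

end Rearrangements

section SortedPerms

variable {α : Type*} {n m : ℕ}

/-- The permutations `v` with `v⁻¹ k - v⁻¹ (k + 1) ≤ 1` whenever the letters `k` and `k + 1` have
the same block `f k = f (k + 1)`. -/
def nearSortedPerms (f : Fin n → α) : Finset (Equiv.Perm (Fin n)) :=
  {v | ∀ i j, (v i : ℕ) = v j + 1 → f (v i) = f (v j) → (j : ℕ) ≤ i + 1}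

/-- The permutations `w` with `w⁻¹ k < w⁻¹ (k + 1)` whenever the letters `k` and `k + 1` have the
same block `f k = f (k + 1)`. -/
def blockSortedPerms (f : Fin n → α) : Finset (Equiv.Perm (Fin n)) :=
  {w | ∀ i j, (w i : ℕ) = w j + 1 → f (w i) = f (w j) → j < i}

/-- The descent positions of `v` at which both letters lie in the same block of `f`. -/
def tiedDescents (f : Fin (m + 1) → α) (v : Equiv.Perm (Fin (m + 1))) : Finset (Fin m) :=
  descents v ∩ plateaus (f ∘ v)

theorem mem_nearSortedPerms {f : Fin n → α} {v : Equiv.Perm (Fin n)} :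
    v ∈ nearSortedPerms f ↔
      ∀ i j, (v i : ℕ) = v j + 1 → f (v i) = f (v j) → (j : ℕ) ≤ i + 1 := by
  simp [nearSortedPerms]

theorem mem_blockSortedPerms {f : Fin n → α} {w : Equiv.Perm (Fin n)} :
    w ∈ blockSortedPerms f ↔ ∀ i j, (w i : ℕ) = w j + 1 → f (w i) = f (w j) → j < i := by
  simp [blockSortedPerms]

theorem mem_tiedDescents {f : Fin (m + 1) → α} {v : Equiv.Perm (Fin (m + 1))} {s : Fin m} :
    s ∈ tiedDescents f v ↔ v s.succ < v s.castSucc ∧ f (v s.castSucc) = f (v s.succ) := by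
  simp [tiedDescents, mem_descents, mem_plateaus]

variable [PartialOrder α]

theorem descents_eq_union_tiedDescents {f : Fin (m + 1) → α} (hf : Monotone f)
    (v : Equiv.Perm (Fin (m + 1))) : descents v = descents (f ∘ v) ∪ tiedDescents f v := by
  ext s
  simp only [mem_union, mem_tiedDescents, mem_descents, Function.comp_apply]
  constructor
  · intro h
    exact (hf h.le).lt_or_eq.imp id fun heq => ⟨h, heq.symm⟩
  · rintro (h | h)
    · exact hf.reflect_lt h
    · exact h.1

theorem val_add_eq_of_tied_inversion {f : Fin n → α} (hf : Monotone f)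
    {v : Equiv.Perm (Fin n)} (hv : v ∈ nearSortedPerms f) {i j s : Fin n} (hij : i < j)
    (tied : f (v i) = f (v j)) (inv : v j < v i) (his : i ≤ s) (hsj : s ≤ j) :
    (v s : ℕ) + s = v j + j := by
  induction hd : (v i - v j : ℕ) using Nat.strong_induction_on generalizing j s with
  | _ d ih =>
    obtain ⟨k, hk⟩ := v.surjective ⟨v j + 1, by omega⟩
    have hk_val : (v k : ℕ) = v j + 1 := congrArg Fin.val hk
    have tied_ik : f (v i) = f (v k) :=
      le_antisymm (tied.le.trans (hf (by omega))) (hf (by omega))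
    have hjk : (j : ℕ) ≤ k + 1 := mem_nearSortedPerms.1 hv k j hk_val (tied_ik.symm.trans tied)
    have hkj : k ≠ j := by rintro rfl; omega
    by_cases hki : k = i
    · subst hki
      obtain rfl | rfl : s = k ∨ s = j := by omega
      all_goals omega
    · have inv_ik : v k < v i :=
        lt_of_le_of_ne (by omega) (v.injective.ne hki)
      by_cases hlt : j < k
      · have := ih _ (by omega) (hij.trans hlt) tied_ik inv_ik hij.le hlt.le rfl
        omega
      · by_cases hsk : s ≤ k
        · have := ih _ (by omega) (by omega) tied_ik inv_ik his hsk rfl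
          omega
        · obtain rfl : s = j := by omega
          rfl

theorem tied_inversion_iff {f : Fin (m + 1) → α} (hf : Monotone f)
    {v : Equiv.Perm (Fin (m + 1))} (hv : v ∈ nearSortedPerms f) {i j : Fin (m + 1)} (hij : i < j)
    (tied : f (v i) = f (v j)) :
    v j < v i ↔ ∀ s : Fin m, i ≤ s.castSucc → s.succ ≤ j → s ∈ tiedDescents f v := by
  refine ⟨fun inv s his hsj => ?_, fun h => lt_of_forall_mem_descents hij fun s his hsj =>
    mem_descents.2 (mem_tiedDescents.1 (h s his hsj)).1⟩
  have hss := Fin.castSucc_lt_succ (i := s)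
  have eq_left := val_add_eq_of_tied_inversion hf hv hij tied inv his (hss.le.trans hsj)
  have eq_right := val_add_eq_of_tied_inversion hf hv hij tied inv (his.trans hss.le) hsj
  have eq_first := val_add_eq_of_tied_inversion hf hv hij tied inv le_rfl hij.le
  rw [Fin.val_castSucc] at eq_left
  rw [Fin.val_succ] at eq_right
  have val_succ_le : (s : ℕ) + 1 ≤ j := hsj
  have le_val_castSucc : (i : ℕ) ≤ s := his
  refine mem_tiedDescents.2 ⟨by omega, le_antisymm ?_ (hf (by omega))⟩
  calc f (v s.castSucc) ≤ f (v i) := hf (by omega)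
    _ = f (v j) := tied
    _ ≤ f (v s.succ) := hf (by omega)

theorem mem_blockSortedPerms_iff {f : Fin (m + 1) → α} (hf : Monotone f)
    {w : Equiv.Perm (Fin (m + 1))} :
    w ∈ blockSortedPerms f ↔ w ∈ nearSortedPerms f ∧ tiedDescents f w = ∅ := by
  constructor
  · intro hw
    have near : w ∈ nearSortedPerms f := mem_nearSortedPerms.2 fun i j hval tied =>
      (Fin.lt_def.1 (mem_blockSortedPerms.1 hw i j hval tied)).le.trans (Nat.le_succ _)
    refine ⟨near, eq_empty_of_forall_notMem fun s hs => ?_⟩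
    obtain ⟨inv, tied⟩ := mem_tiedDescents.1 hs
    have hss := Fin.castSucc_lt_succ (i := s)
    have hval := val_add_eq_of_tied_inversion hf near hss tied inv le_rfl hss.le
    rw [Fin.val_castSucc, Fin.val_succ] at hval
    exact hss.not_gt (mem_blockSortedPerms.1 hw _ _ (by omega) tied)
  · rintro ⟨near, no_tied⟩
    refine mem_blockSortedPerms.2 fun i j hval tied => ?_
    by_contra! hij
    have hij : i < j := hij.lt_of_ne (by rintro rfl; omega)
    have all_tied := (tied_inversion_iff hf near hij tied).1 (by omega)
    have first_tied := all_tied (i.castPred (Fin.ne_last_of_lt hij)) (by simp)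
      ((Fin.succ_castPred_le_iff _).2 hij)
    simp [no_tied] at first_tied

end SortedPerms

section SortPerm

variable {α : Type*} {m : ℕ}

/-- The key by which `sortPerm u S` sorts the positions: first by letter, then by the number of
preceding positions outside `S`, then from right to left. -/
def sortKey (u : Fin (m + 1) → α) (S : Finset (Fin m)) (i : Fin (m + 1)) :
    α ×ₗ ℕ ×ₗ (Fin (m + 1))ᵒᵈ :=
  toLex (u i, toLex (#{s ∈ Sᶜ | s.castSucc < i}, OrderDual.toDual i))

theorem sortKey_injective (u : Fin (m + 1) → α) (S : Finset (Fin m)) :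
    Function.Injective (sortKey u S) := by
  intro i j h
  simp only [sortKey, EmbeddingLike.apply_eq_iff_eq, Prod.mk.injEq] at h
  exact h.2.2

variable [LinearOrder α]

/-- The standardization of a word `u` in which every maximal run of consecutive plateaus in `S`
is numbered from right to left instead of from left to right. -/
def sortPerm (u : Fin (m + 1) → α) (S : Finset (Fin m)) : Equiv.Perm (Fin (m + 1)) :=
  (Tuple.sort (sortKey u S))⁻¹

variable {u : Fin (m + 1) → α} {S : Finset (Fin m)}

theorem sortKey_lt_of_lt {i j : Fin (m + 1)} (h : u i < u j) : sortKey u S i < sortKey u S j :=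
  Prod.Lex.toLex_lt_toLex.2 (Or.inl h)

theorem sortKey_lt_iff_of_eq {i j : Fin (m + 1)} (hij : i < j) (h : u i = u j) :
    sortKey u S j < sortKey u S i ↔
      ∀ s : Fin m, i ≤ s.castSucc → s.succ ≤ j → s ∈ S := by
  have filter_subset : ({s ∈ Sᶜ | s.castSucc < i} : Finset (Fin m)) ⊆
      {s ∈ Sᶜ | s.castSucc < j} := monotone_filter_right _ fun _ _ hs => hs.trans hij
  have key_iff : sortKey u S j < sortKey u S i ↔
      ({s ∈ Sᶜ | s.castSucc < j} : Finset (Fin m)) ⊆ {s ∈ Sᶜ | s.castSucc < i} := by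
    simp only [sortKey, Prod.Lex.toLex_lt_toLex, h, lt_irrefl, false_or, true_and,
      OrderDual.toDual_lt_toDual, hij, and_true, ← le_iff_lt_or_eq]
    exact ⟨fun hle => (eq_of_subset_of_card_le filter_subset hle).ge, card_le_card⟩
  rw [key_iff]
  simp only [subset_iff, mem_filter, mem_compl, ← Fin.castSucc_lt_iff_succ_le]
  refine forall_congr' fun s => ?_
  rw [← not_lt]
  tauto

theorem sortPerm_lt_sortPerm_iff {i j : Fin (m + 1)} :
    sortPerm u S i < sortPerm u S j ↔ sortKey u S i < sortKey u S j := by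
  have strictMono : StrictMono (sortKey u S ∘ Tuple.sort (sortKey u S)) :=
    (Tuple.monotone_sort _).strictMono_of_injective
      ((sortKey_injective u S).comp (Equiv.injective _))
  simpa [sortPerm] using (strictMono.lt_iff_lt (a := sortPerm u S i) (b := sortPerm u S j)).symm

theorem eq_sortPerm {v : Equiv.Perm (Fin (m + 1))}
    (h : ∀ i j, v i < v j → sortKey u S i < sortKey u S j) : v = sortPerm u S := by
  have strictMono : StrictMono (sortKey u S ∘ ⇑v⁻¹) := fun a b hab =>
    h _ _ (by simpa using hab)
  exact inv_eq_iff_eq_inv.1 <| Tuple.eq_sort_iff.2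
    ⟨strictMono.monotone, fun a b hab heq => absurd heq (strictMono hab).ne⟩

theorem comp_sortPerm {f : Fin (m + 1) → α} (hf : Monotone f) (hu : u ∈ rearrangements f) :
    f ∘ sortPerm u S = u := by
  obtain ⟨σ, rfl⟩ := mem_rearrangements.1 hu
  have sorted : Monotone (f ∘ ⇑(σ * (sortPerm (f ∘ σ) S)⁻¹)) := fun a b hab => by
    by_contra! hlt
    have := Tuple.monotone_sort (sortKey (f ∘ σ) S) hab
    exact this.not_gt (sortKey_lt_of_lt (by simpa [sortPerm] using hlt))
  have eq_self := Tuple.unique_monotone sorted (τ := 1) hf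
  funext i
  simpa using (congrFun eq_self (sortPerm (f ∘ σ) S i)).symm

theorem tiedDescents_sortPerm {f : Fin (m + 1) → α} (hf : Monotone f)
    (hu : u ∈ rearrangements f) (hS : S ⊆ plateaus u) :
    tiedDescents f (sortPerm u S) = S := by
  ext s
  have mem_iff (tied : u s.castSucc = u s.succ) :
      sortKey u S s.succ < sortKey u S s.castSucc ↔ s ∈ S := by
    rw [sortKey_lt_iff_of_eq Fin.castSucc_lt_succ tied]
    refine ⟨fun h => h s le_rfl le_rfl, fun hs s' hle hge => ?_⟩
    rwa [le_antisymm (Fin.succ_le_succ_iff.1 hge) (Fin.castSucc_le_castSucc_iff.1 hle)]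
  have tied_iff := congrFun (comp_sortPerm (S := S) hf hu)
  simp only [Function.comp_apply] at tied_iff
  rw [mem_tiedDescents, sortPerm_lt_sortPerm_iff, tied_iff, tied_iff]
  exact ⟨fun h => (mem_iff h.2).1 h.1,
    fun hs => have tied := mem_plateaus.1 (hS hs); ⟨(mem_iff tied).2 hs, tied⟩⟩

theorem sortPerm_mem_nearSortedPerms {f : Fin (m + 1) → α} (hf : Monotone f)
    (hu : u ∈ rearrangements f) (hS : S ⊆ plateaus u) :
    sortPerm u S ∈ nearSortedPerms f := by
  have comp_apply := congrFun (comp_sortPerm (S := S) hf hu)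
  simp only [Function.comp_apply] at comp_apply
  refine mem_nearSortedPerms.2 fun i j hval tied => ?_
  rw [comp_apply, comp_apply] at tied
  by_contra! hij
  have inv : sortKey u S j < sortKey u S i :=
    sortPerm_lt_sortPerm_iff.1 (Fin.lt_def.2 (by omega))
  have mem_S := (sortKey_lt_iff_of_eq (by omega) tied).1 inv
  -- The letter at position `i + 1` would lie strictly between those at positions `j` and `i`.
  let s : Fin m := ⟨i, by omega⟩
  have hsj : s.succ < j := Fin.lt_def.2 hij
  have tied_s : u i = u s.succ := mem_plateaus.1 (hS (mem_S s le_rfl hsj.le))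
  have key_left : sortKey u S s.succ < sortKey u S i :=
    (sortKey_lt_iff_of_eq Fin.castSucc_lt_succ tied_s).2 fun r hr hr' =>
      mem_S r hr (hr'.trans hsj.le)
  have key_right : sortKey u S j < sortKey u S s.succ :=
    (sortKey_lt_iff_of_eq hsj (tied_s.symm.trans tied)).2 fun r hr =>
      mem_S r (Fin.castSucc_lt_succ.le.trans hr)
  have := sortPerm_lt_sortPerm_iff.2 key_left
  have := sortPerm_lt_sortPerm_iff.2 key_right
  omega

theorem sortPerm_comp_tiedDescents {f : Fin (m + 1) → α} (hf : Monotone f)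
    {v : Equiv.Perm (Fin (m + 1))} (hv : v ∈ nearSortedPerms f) :
    sortPerm (f ∘ v) (tiedDescents f v) = v := by
  refine (eq_sortPerm fun i j hlt => ?_).symm
  rcases (hf hlt.le).lt_or_eq with h | tied
  · exact sortKey_lt_of_lt h
  rcases lt_trichotomy i j with hij | rfl | hji
  · have key_not_gt := (sortKey_lt_iff_of_eq (u := f ∘ v) hij tied).not.2
      ((tied_inversion_iff hf hv hij tied).not.1 hlt.not_gt)
    exact (not_lt.1 key_not_gt).lt_of_ne ((sortKey_injective _ _).ne hij.ne)
  · exact absurd hlt (lt_irrefl _)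
  · exact (sortKey_lt_iff_of_eq hji tied.symm).2
      ((tied_inversion_iff hf hv hji tied.symm).1 hlt)

theorem sum_nearSortedPerms {M : Type*} [AddCommMonoid M] {f : Fin (m + 1) → α} (hf : Monotone f)
    (g : (Fin (m + 1) → α) → Finset (Fin m) → M) :
    ∑ v ∈ nearSortedPerms f, g (f ∘ v) (tiedDescents f v) =
      ∑ u ∈ rearrangements f, ∑ S ∈ (plateaus u).powerset, g u S := by
  rw [sum_sigma']
  refine sum_nbij' (fun v => ⟨f ∘ v, tiedDescents f v⟩) (fun p => sortPerm p.1 p.2)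
    (fun v _ => ?_) (fun p hp => ?_) (fun v hv => sortPerm_comp_tiedDescents hf hv)
    (fun p hp => ?_) fun _ _ => rfl
  · exact mem_sigma.2 ⟨mem_rearrangements.2 ⟨v, rfl⟩, mem_powerset.2 inter_subset_right⟩
  all_goals
    obtain ⟨hu, hS⟩ := mem_sigma.1 hp
    rw [mem_powerset] at hS
  · exact sortPerm_mem_nearSortedPerms hf hu hS
  · exact Sigma.ext (comp_sortPerm hf hu) (heq_of_eq (tiedDescents_sortPerm hf hu hS))

theorem sum_nearSortedPerms_descents {M : Type*} [AddCommMonoid M] {f : Fin (m + 1) → α}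
    (hf : Monotone f) (g : Finset (Fin m) → M) :
    ∑ v ∈ nearSortedPerms f, g (descents v) =
      ∑ u ∈ rearrangements f, ∑ S ∈ (plateaus u).powerset, g (descents u ∪ S) := by
  rw [← sum_nearSortedPerms hf fun u S => g (descents u ∪ S)]
  exact sum_congr rfl fun v _ => by rw [descents_eq_union_tiedDescents hf]

theorem sum_blockSortedPerms_descents {M : Type*} [AddCommMonoid M] {f : Fin (m + 1) → α}
    (hf : Monotone f) (g : Finset (Fin m) → M) :
    ∑ w ∈ blockSortedPerms f, g (descents w) = ∑ u ∈ rearrangements f, g (descents u) := by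
  have blockSorted_eq : blockSortedPerms f = {w ∈ nearSortedPerms f | tiedDescents f w = ∅} := by
    ext w
    rw [mem_filter, mem_blockSortedPerms_iff hf]
  calc ∑ w ∈ blockSortedPerms f, g (descents w)
      = ∑ w ∈ nearSortedPerms f, if tiedDescents f w = ∅ then g (descents (f ∘ w)) else 0 := by
        rw [blockSorted_eq, sum_filter]
        refine sum_congr rfl fun w _ => ?_
        split_ifs with no_tied
        · rw [descents_eq_union_tiedDescents hf, no_tied, union_empty]
        · rfl
    _ = ∑ u ∈ rearrangements f, g (descents u) := by
        rw [sum_nearSortedPerms hf fun u S => if S = ∅ then g (descents u) else 0]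
        simp

end SortPerm

section Blocks

variable {m n : ℕ} {K : Finset ℕ}

/-- The index of the `W_K`-orbit of a letter, with the letters numbered from `0`. -/
def letterBlock (n : ℕ) (K : Finset ℕ) (a : Fin n) : ℕ := orbIdx K (a + 1)

theorem monotone_letterBlock (n : ℕ) (K : Finset ℕ) : Monotone (letterBlock n K) :=
  fun a b hab => Nat.add_le_add_left
    (card_le_card (filter_subset_filter _ (Icc_subset_Icc_right (by simpa using hab)))) 1

theorem letterBlock_eq_iff_mem {a b : Fin n} (h : (a : ℕ) = b + 1) :
    letterBlock n K a = letterBlock n K b ↔ (a : ℕ) ∈ K := by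
  simp only [letterBlock, orbIdx, Nat.add_sub_cancel, h, Nat.add_left_cancel_iff,
    ← insert_Icc_right_eq_Icc_add_one (Nat.le_add_left 1 (b : ℕ)), filter_insert]
  split_ifs with hK
  · simp [hK]
  · simp [hK]

theorem forall_mem_iff_forall_letterBlock_eq (hK : 0 ∉ K) (v : Equiv.Perm (Fin n))
    (P : Fin n → Fin n → Prop) :
    (∀ k ∈ K, ∀ hk : k < n, P (v⁻¹ ⟨k - 1, (Nat.sub_le k 1).trans_lt hk⟩) (v⁻¹ ⟨k, hk⟩)) ↔
      ∀ i j, (v i : ℕ) = v j + 1 → letterBlock n K (v i) = letterBlock n K (v j) → P j i := by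
  constructor
  · intro h i j hval tied
    have mem_K := (letterBlock_eq_iff_mem hval).1 tied
    have pred_eq : (⟨v i - 1, (Nat.sub_le _ 1).trans_lt (v i).2⟩ : Fin n) = v j :=
      Fin.ext (by simp [hval])
    simpa [pred_eq] using h _ mem_K (v i).2
  · intro h k hk hkn
    have k_ne : k ≠ 0 := fun h0 => hK (h0 ▸ hk)
    have val_eq : (v (v⁻¹ ⟨k, hkn⟩) : ℕ) =
        v (v⁻¹ ⟨k - 1, (Nat.sub_le k 1).trans_lt hkn⟩) + 1 := by
      simp only [Equiv.Perm.coe_inv, Equiv.apply_symm_apply]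
      exact (Nat.succ_pred k_ne).symm
    exact h _ _ val_eq ((letterBlock_eq_iff_mem val_eq).2 (by simpa using hk))

theorem Wset_eq_nearSortedPerms (hK : 0 ∉ K) : Wset n K = nearSortedPerms (letterBlock n K) := by
  ext v
  rw [mem_nearSortedPerms, Wset, mem_filter, and_iff_right (mem_univ v)]
  exact forall_mem_iff_forall_letterBlock_eq hK v fun j i => (j : ℕ) ≤ i + 1

theorem WKreps_eq_blockSortedPerms (hK : 0 ∉ K) :
    WKreps n K = blockSortedPerms (letterBlock n K) := by
  ext w
  rw [mem_blockSortedPerms, WKreps, mem_filter, and_iff_right (mem_univ w)]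
  exact forall_mem_iff_forall_letterBlock_eq hK w fun j i => j < i

theorem DesSet_eq_map_descents (v : Equiv.Perm (Fin (m + 1))) :
    DesSet (m + 1) v = (descents v).map Fin.valEmbedding := by
  ext i
  simp only [DesSet, ol, Nat.add_sub_cancel, mem_filter, mem_range, mem_map, mem_descents,
    Fin.valEmbedding_apply]
  constructor
  · rintro ⟨him, h⟩
    rw [dif_pos (by omega), dif_pos (by omega)] at h
    exact ⟨⟨i, him⟩, h, rfl⟩
  · rintro ⟨s, h, rfl⟩
    rw [dif_pos (by omega), dif_pos (by omega)]
    exact ⟨s.2, h⟩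

theorem des_eq_card_descents (v : Equiv.Perm (Fin (m + 1))) :
    des (m + 1) v = #(descents v) := by
  rw [des, DesSet_eq_map_descents, card_map]

theorem noDoubleDescent_and_noFinalDescent_iff (v : Equiv.Perm (Fin (m + 1))) :
    NoDoubleDescent (m + 1) v ∧ NoFinalDescent (m + 1) v ↔ IsSparse (descents v) := by
  simp only [NoDoubleDescent, NoFinalDescent, IsSparse, DesSet_eq_map_descents, mem_map,
    Fin.valEmbedding_apply]
  constructor
  · rintro ⟨no_double, no_final⟩ i hi
    have i_ne_last : (i : ℕ) + 1 ≠ m := fun h => no_final ⟨i, hi, by omega⟩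
    exact ⟨⟨i + 1, by omega⟩, fun hj => no_double i ⟨i, hi, rfl⟩ ⟨_, hj, rfl⟩, rfl⟩
  · intro sparse
    constructor
    · rintro _ ⟨i, hi, rfl⟩ ⟨j, hj, hji⟩
      obtain ⟨k, hk, hki⟩ := sparse i hi
      exact hk (Fin.ext (hki.trans hji.symm) ▸ hj)
    · rintro ⟨i, hi, hi_last⟩
      obtain ⟨k, -, hki⟩ := sparse i hi
      omega

end Blocks

theorem main_theorem_hat (n : ℕ) (K : Finset ℕ)
    (hK : ∀ k ∈ K, 1 ≤ k ∧ k ≤ n - 1) :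
    ∑ v ∈ Wset n K, (X : Polynomial ℕ) ^ des n v =
      ∑ w ∈ (WKreps n K).filter
          (fun w => NoDoubleDescent n w ∧ NoFinalDescent n w),
        (X : Polynomial ℕ) ^ des n w * (1 + X) ^ (n - 1 - 2 * des n w) := by
  have zero_notMem : 0 ∉ K := fun h => absurd (hK 0 h).1 (by norm_num)
  cases n with
  | zero => simp [Wset, WKreps, NoDoubleDescent, NoFinalDescent, DesSet, des]
  | succ m =>
    have block_mono := monotone_letterBlock (m + 1) K
    rw [Wset_eq_nearSortedPerms zero_notMem, WKreps_eq_blockSortedPerms zero_notMem, sum_filter]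
    simp only [des_eq_card_descents, noDoubleDescent_and_noFinalDescent_iff]
    calc ∑ v ∈ nearSortedPerms (letterBlock (m + 1) K), (X : ℕ[X]) ^ #(descents v)
        = ∑ u ∈ rearrangements (letterBlock (m + 1) K), plateauWeight X u := by
          rw [sum_nearSortedPerms_descents block_mono fun D => (X : ℕ[X]) ^ #D]
          simp only [plateauWeight_eq_sum_powerset]
      _ = ∑ u ∈ rearrangements (letterBlock (m + 1) K), sparseWeight X (descents u) :=
          sum_plateauWeight_eq_sum_sparseWeight _
      _ = ∑ w ∈ blockSortedPerms (letterBlock (m + 1) K), sparseWeight X (descents w) :=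
          (sum_blockSortedPerms_descents block_mono _).symm
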